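/- The normalization condition holds: ∫₀^a P₁(l) dl + ∫_a^{√2·a} P₂(l) dl + ∫_{√2·a}^{√3·a} P₃(l) dl = 1. -/

import Mathlib

open MeasureTheory Real Set

/-- The density of separations on the range `0 ≤ l ≤ a`. -/
noncomputable def P₁ (a l : ℝ) : ℝ :=
  l ^ 2 * (4 * π * a ^ 3 - 6 * π * a ^ 2 * l + 8 * a * l ^ 2 - l ^ 3) / a ^ 6

/-- The density of separations on the range `a ≤ l ≤ √2·a`. -/
noncomputable def P₂ (a l : ℝ) : ℝ :=
  l / a ^ 6 *
    (2 * l ^ 4 + 6 * a ^ 2 * l ^ 2 - a ^ 4 - 2 * π * a ^ 3 * (4 * l - 3 * a)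
      - 8 * a * (2 * l ^ 2 + a ^ 2) * Real.sqrt (l ^ 2 - a ^ 2)
      + 24 * a ^ 2 * l ^ 2 * Real.arccos (a / l))

/-- The density of separations on the range `√2·a ≤ l ≤ √3·a`. -/
noncomputable def P₃ (a l : ℝ) : ℝ :=
  l / a ^ 6 *
    (8 * a * (l ^ 2 + a ^ 2) * Real.sqrt (l ^ 2 - 2 * a ^ 2)
      - (l ^ 2 + a ^ 2) * (l ^ 2 + 5 * a ^ 2)
      + 2 * π * a ^ 2 * (3 * l ^ 2 - 4 * a * l + 3 * a ^ 2)
      + 24 * a ^ 3 * l * Real.arccos (a ^ 2 / (l ^ 2 - a ^ 2))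
      - 24 * a ^ 2 * (l ^ 2 + a ^ 2) * Real.arccos (a / Real.sqrt (l ^ 2 - a ^ 2)))

/-!
The densities are homogeneous of degree `-1`, so each of the three integrals is independent of `a`
and may be computed at `a = 1`. There the arccosines become arctangents,
`arccos (1 / l) = arctan √(l² - 1)`, `arccos (1 / √(l² - 1)) = arctan √(l² - 2)` and
`arccos (1 / (l² - 1)) = arctan (l √(l² - 2))`. With `s = √(l² - c)` one has `ds/dl = l / s`, so
integration by parts removes the arctangents and leaves integrals of polynomials in `s`, apart from
one term that gives back `arctan s`. The endpoints `1`, `√2`, `√3` only involve `arctan` at `0`, `1`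
and `√3`.
-/

lemma arccos_inv_eq_arctan_sqrt {x : ℝ} (hx : 0 < x) : arccos x⁻¹ = arctan √(x ^ 2 - 1) := by
  rw [arccos_eq_arctan (inv_pos.2 hx), div_inv_eq_mul, mul_comm]
  nth_rw 1 [← sqrt_sq hx.le]
  rw [← sqrt_mul (sq_nonneg x)]
  congr 2
  field_simp

section SqrtSqSub

variable {c x : ℝ}

lemma hasDerivAt_sqrt_sq_sub (h : x ^ 2 - c ≠ 0) :
    HasDerivAt (fun l ↦ √(l ^ 2 - c)) (x / √(x ^ 2 - c)) x := by
  refine (((hasDerivAt_pow 2 x).sub_const c).sqrt h).congr_deriv ?_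
  push_cast
  rw [pow_one, mul_div_mul_left _ _ two_ne_zero]

lemma hasDerivAt_sqrt_sq_sub_pow (h : c < x ^ 2) (n : ℕ) :
    HasDerivAt (fun l ↦ √(l ^ 2 - c) ^ (n + 2)) ((n + 2) * x * √(x ^ 2 - c) ^ n) x := by
  have hs : 0 < √(x ^ 2 - c) := sqrt_pos.2 (sub_pos.2 h)
  refine ((hasDerivAt_sqrt_sq_sub (sub_pos.2 h).ne').fun_pow (n + 2)).congr_deriv ?_
  rw [Nat.add_succ_sub_one]
  push_cast
  field_simp
  ring

lemma hasDerivAt_arctan_sqrt_sq_sub (h : c < x ^ 2) :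
    HasDerivAt (fun l ↦ arctan √(l ^ 2 - c)) (x / ((1 + x ^ 2 - c) * √(x ^ 2 - c))) x := by
  have hc : 0 < x ^ 2 - c := sub_pos.2 h
  refine (hasDerivAt_sqrt_sq_sub hc.ne').arctan.congr_deriv ?_
  rw [sq_sqrt hc.le, ← add_sub_assoc, one_div_mul_eq_div, div_div, mul_comm]

lemma hasDerivAt_arctan_mul_sqrt_sq_sub (h : c < x ^ 2) :
    HasDerivAt (fun l ↦ arctan (l * √(l ^ 2 - c)))
      ((2 * x ^ 2 - c) / ((1 + x ^ 2 * (x ^ 2 - c)) * √(x ^ 2 - c))) x := by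
  have hc : 0 < x ^ 2 - c := sub_pos.2 h
  have hs : √(x ^ 2 - c) ^ 2 = x ^ 2 - c := sq_sqrt hc.le
  have hs₀ : √(x ^ 2 - c) ≠ 0 := (sqrt_pos.2 hc).ne'
  refine ((hasDerivAt_id' x).fun_mul (hasDerivAt_sqrt_sq_sub hc.ne')).arctan.congr_deriv ?_
  rw [mul_pow, hs]
  field_simp
  rw [hs]
  ring

end SqrtSqSub

lemma integral_eq_of_comp_mul_right_eq_div {f g : ℝ → ℝ} {a : ℝ} (ha : a ≠ 0)
    (h : ∀ x, f (x * a) = g x / a) (u v : ℝ) :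
    ∫ l in u * a..v * a, f l = ∫ l in u..v, g l := by
  simp_rw [← intervalIntegral.mul_integral_comp_mul_right, h, intervalIntegral.integral_div]
  exact mul_div_cancel₀ _ ha

lemma P₁_mul_right {a : ℝ} (ha : a ≠ 0) (x : ℝ) : P₁ a (x * a) = P₁ 1 x / a := by
  unfold P₁
  field_simp

lemma P₂_mul_right {a : ℝ} (ha : 0 < a) (x : ℝ) : P₂ a (x * a) = P₂ 1 x / a := by
  have hsqrt : √((x * a) ^ 2 - a ^ 2) = √(x ^ 2 - 1) * a := by
    rw [mul_pow, ← sub_one_mul, sqrt_mul' _ (sq_nonneg a), sqrt_sq ha.le]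
  have harccos : a / (x * a) = 1 / x := by field_simp
  simp only [P₂, hsqrt, harccos, one_pow]
  field_simp

lemma P₃_mul_right {a : ℝ} (ha : 0 < a) (x : ℝ) : P₃ a (x * a) = P₃ 1 x / a := by
  have hsub : (x * a) ^ 2 - a ^ 2 = (x ^ 2 - 1) * a ^ 2 := by ring
  have hsqrt₁ : √((x ^ 2 - 1) * a ^ 2) = √(x ^ 2 - 1) * a := by
    rw [sqrt_mul' _ (sq_nonneg a), sqrt_sq ha.le]
  have hsqrt₂ : √((x * a) ^ 2 - 2 * a ^ 2) = √(x ^ 2 - 2) * a := by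
    rw [mul_pow, ← sub_mul, sqrt_mul' _ (sq_nonneg a), sqrt_sq ha.le]
  have harccos₁ : a / (√(x ^ 2 - 1) * a) = 1 / √(x ^ 2 - 1) := by field_simp
  have harccos₂ : a ^ 2 / ((x ^ 2 - 1) * a ^ 2) = 1 / (x ^ 2 - 1) := by field_simp
  simp only [P₃, hsub, hsqrt₁, hsqrt₂, harccos₁, harccos₂, one_pow, mul_one]
  field_simp

lemma integral_P₁_one : ∫ l in (0 : ℝ)..1, P₁ 1 l = 43 / 30 - π / 6 := by
  have hderiv : ∀ x ∈ uIcc (0 : ℝ) 1, HasDerivAt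
      (fun l : ℝ ↦ 4 * π / 3 * l ^ 3 - 3 * π / 2 * l ^ 4 + 8 / 5 * l ^ 5 - l ^ 6 / 6)
      (P₁ 1 x) x := by
    intro x _
    refine (((((hasDerivAt_pow 3 x).const_mul (4 * π / 3)).fun_sub
      ((hasDerivAt_pow 4 x).const_mul (3 * π / 2))).fun_add
      ((hasDerivAt_pow 5 x).const_mul (8 / 5))).fun_sub
      ((hasDerivAt_pow 6 x).div_const 6)).congr_deriv ?_
    simp only [P₁]
    push_cast
    ring
  have hcont : Continuous (P₁ 1) := by unfold P₁; fun_prop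
  rw [intervalIntegral.integral_eq_sub_of_hasDerivAt hderiv (hcont.intervalIntegrable 0 1)]
  ring

lemma integral_P₁ {a : ℝ} (ha : a ≠ 0) : ∫ l in (0 : ℝ)..a, P₁ a l = 43 / 30 - π / 6 := by
  simpa only [zero_mul, one_mul, integral_P₁_one] using
    integral_eq_of_comp_mul_right_eq_div ha (P₁_mul_right ha) 0 1

/-- An antiderivative on `(1, ∞)` of the arccosine term `24 l³ arccos (1 / l)` of `P₂ 1 l`, obtained
by integrating `24 l³ arctan √(l² - 1)` by parts. -/
noncomputable def arccosPrimitive₂ (l : ℝ) : ℝ :=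
  6 * l ^ 4 * arctan √(l ^ 2 - 1) - 2 * √(l ^ 2 - 1) ^ 3 - 6 * √(l ^ 2 - 1)

lemma hasDerivAt_arccosPrimitive₂ {x : ℝ} (hx : 1 < x) :
    HasDerivAt arccosPrimitive₂ (24 * x ^ 3 * arccos (1 / x)) x := by
  have hx₀ : 0 < x := one_pos.trans hx
  have hx₂ : 1 < x ^ 2 := one_lt_pow₀ hx two_ne_zero
  have hs : √(x ^ 2 - 1) ^ 2 = x ^ 2 - 1 := sq_sqrt (sub_pos.2 hx₂).le
  have hs₀ : 0 < √(x ^ 2 - 1) := sqrt_pos.2 (sub_pos.2 hx₂)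
  refine (((((hasDerivAt_pow 4 x).const_mul 6).fun_mul (hasDerivAt_arctan_sqrt_sq_sub hx₂)).fun_sub
    ((hasDerivAt_sqrt_sq_sub_pow hx₂ 1).const_mul 2)).fun_sub
    ((hasDerivAt_sqrt_sq_sub (sub_pos.2 hx₂).ne').const_mul 6)).congr_deriv ?_
  rw [one_div, arccos_inv_eq_arctan_sqrt hx₀, add_sub_cancel_left]
  push_cast
  field_simp
  linear_combination -6 * hs

/-- An antiderivative of `P₂ 1` on `(1, ∞)`. -/
noncomputable def primitive₂ (l : ℝ) : ℝ :=
  l ^ 6 / 3 + 3 / 2 * l ^ 4 - 8 * π / 3 * l ^ 3 + (3 * π - 1 / 2) * l ^ 2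
    - 16 / 5 * √(l ^ 2 - 1) ^ 5 - 8 * √(l ^ 2 - 1) ^ 3 + arccosPrimitive₂ l

lemma hasDerivAt_primitive₂ {x : ℝ} (hx : 1 < x) : HasDerivAt primitive₂ (P₂ 1 x) x := by
  have hx₂ : 1 < x ^ 2 := one_lt_pow₀ hx two_ne_zero
  have hs : √(x ^ 2 - 1) ^ 2 = x ^ 2 - 1 := sq_sqrt (sub_pos.2 hx₂).le
  have hpoly := ((((hasDerivAt_pow 6 x).div_const 3).fun_add
    ((hasDerivAt_pow 4 x).const_mul (3 / 2))).fun_sub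
    ((hasDerivAt_pow 3 x).const_mul (8 * π / 3))).fun_add
    ((hasDerivAt_pow 2 x).const_mul (3 * π - 1 / 2))
  refine (((hpoly.fun_sub ((hasDerivAt_sqrt_sq_sub_pow hx₂ 3).const_mul (16 / 5))).fun_sub
    ((hasDerivAt_sqrt_sq_sub_pow hx₂ 1).const_mul 8)).fun_add
    (hasDerivAt_arccosPrimitive₂ hx)).congr_deriv ?_
  simp only [P₂, one_pow]
  push_cast
  linear_combination -16 * x * √(x ^ 2 - 1) * hs

lemma primitive₂_one : primitive₂ 1 = π / 3 + 4 / 3 := by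
  simp only [primitive₂, arccosPrimitive₂, one_pow, sub_self, sqrt_zero, arctan_zero]
  ring

lemma primitive₂_sqrt_two : primitive₂ √2 = 12 * π - 16 * √2 * π / 3 - 173 / 15 := by
  have h2 : √2 ^ 2 = 2 := sq_sqrt zero_le_two
  have hs : √2 ^ 2 - 1 = 1 := by rw [h2]; norm_num
  simp only [primitive₂, arccosPrimitive₂, hs, sqrt_one, arctan_one]
  grind

lemma integral_P₂_one : ∫ l in (1 : ℝ)..√2, P₂ 1 l = 35 * π / 3 - 16 * √2 * π / 3 - 193 / 15 := by
  have hle : 1 ≤ √2 := one_le_sqrt.2 one_le_two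
  have hcont : Continuous primitive₂ := by unfold primitive₂ arccosPrimitive₂; fun_prop
  have hint : IntervalIntegrable (P₂ 1) volume 1 √2 := by
    refine ContinuousOn.intervalIntegrable_of_Icc hle ?_
    have hne : ∀ x ∈ Icc 1 √2, x ≠ 0 := fun x hx ↦ (one_pos.trans_le hx.1).ne'
    unfold P₂
    fun_prop (disch := assumption)
  rw [intervalIntegral.integral_eq_sub_of_hasDerivAt_of_le hle hcont.continuousOn
    (fun x hx ↦ hasDerivAt_primitive₂ hx.1) hint, primitive₂_sqrt_two, primitive₂_one]
  ring

lemma integral_P₂ {a : ℝ} (ha : 0 < a) :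
    ∫ l in a..√2 * a, P₂ a l = 35 * π / 3 - 16 * √2 * π / 3 - 193 / 15 := by
  simpa only [one_mul, integral_P₂_one] using
    integral_eq_of_comp_mul_right_eq_div ha.ne' (P₂_mul_right ha) 1 √2

/-- An antiderivative on `(√2, ∞)` of the arccosine terms
`24 l² arccos (1 / (l² - 1)) - 24 l (l² + 1) arccos (1 / √(l² - 1))` of `P₃ 1 l`. Writing
`s = √(l² - 2)`, the two integrations by parts together leave `∫ l (6 s² + 14) / s` and
`∫ 2 l / ((l² - 1) s) = 2 arctan s`. -/
noncomputable def arccosPrimitive₃ (l : ℝ) : ℝ :=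
  8 * l ^ 3 * arctan (l * √(l ^ 2 - 2)) + (2 - 6 * l ^ 4 - 12 * l ^ 2) * arctan √(l ^ 2 - 2)
    + 2 * √(l ^ 2 - 2) ^ 3 + 14 * √(l ^ 2 - 2)

lemma arccos_one_div_sqrt_sq_sub_one {x : ℝ} (hx : 1 < x ^ 2) :
    arccos (1 / √(x ^ 2 - 1)) = arctan √(x ^ 2 - 2) := by
  rw [one_div, arccos_inv_eq_arctan_sqrt (sqrt_pos.2 (sub_pos.2 hx)), sq_sqrt (sub_pos.2 hx).le,
    sub_sub, one_add_one_eq_two]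

lemma arccos_one_div_sq_sub_one {x : ℝ} (hx : 1 < x) :
    arccos (1 / (x ^ 2 - 1)) = arctan (x * √(x ^ 2 - 2)) := by
  have hx₂ : 1 < x ^ 2 := one_lt_pow₀ hx two_ne_zero
  have hfactor : (x ^ 2 - 1) ^ 2 - 1 = x ^ 2 * (x ^ 2 - 2) := by ring
  rw [one_div, arccos_inv_eq_arctan_sqrt (sub_pos.2 hx₂), hfactor, sqrt_mul (sq_nonneg x),
    sqrt_sq (one_pos.trans hx).le]

lemma hasDerivAt_arccosPrimitive₃ {x : ℝ} (hx : √2 < x) :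
    HasDerivAt arccosPrimitive₃ (24 * x ^ 2 * arccos (1 / (x ^ 2 - 1))
      - 24 * x * (x ^ 2 + 1) * arccos (1 / √(x ^ 2 - 1))) x := by
  have hx₁ : 1 < x := one_lt_sqrt_two.trans hx
  have hx₂ : 2 < x ^ 2 := (sqrt_lt' (one_pos.trans hx₁)).1 hx
  have hs : √(x ^ 2 - 2) ^ 2 = x ^ 2 - 2 := sq_sqrt (sub_pos.2 hx₂).le
  have hs₀ : 0 < √(x ^ 2 - 2) := sqrt_pos.2 (sub_pos.2 hx₂)
  have hu : x ^ 2 - 1 ≠ 0 := by linarith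
  have hcoeff := (((hasDerivAt_pow 4 x).const_mul 6).const_sub 2).fun_sub
    ((hasDerivAt_pow 2 x).const_mul 12)
  refine ((((((hasDerivAt_pow 3 x).const_mul 8).fun_mul
    (hasDerivAt_arctan_mul_sqrt_sq_sub hx₂)).fun_add
    (hcoeff.fun_mul (hasDerivAt_arctan_sqrt_sq_sub hx₂))).fun_add
    ((hasDerivAt_sqrt_sq_sub_pow hx₂ 1).const_mul 2)).fun_add
    ((hasDerivAt_sqrt_sq_sub (sub_pos.2 hx₂).ne').const_mul 14)).congr_deriv ?_
  rw [arccos_one_div_sqrt_sq_sub_one (by linarith), arccos_one_div_sq_sub_one hx₁,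
    show 1 + x ^ 2 * (x ^ 2 - 2) = (x ^ 2 - 1) ^ 2 by ring,
    show 1 + x ^ 2 - 2 = x ^ 2 - 1 by ring]
  push_cast
  field_simp
  linear_combination 6 * (x ^ 2 - 1) * hs

/-- An antiderivative of `P₃ 1` on `(√2, ∞)`. -/
noncomputable def primitive₃ (l : ℝ) : ℝ :=
  -l ^ 6 / 6 + 3 / 2 * (π - 1) * l ^ 4 - 8 * π / 3 * l ^ 3 + (3 * π - 5 / 2) * l ^ 2
    + 8 / 5 * √(l ^ 2 - 2) ^ 5 + 8 * √(l ^ 2 - 2) ^ 3 + arccosPrimitive₃ l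

lemma hasDerivAt_primitive₃ {x : ℝ} (hx : √2 < x) : HasDerivAt primitive₃ (P₃ 1 x) x := by
  have hx₂ : 2 < x ^ 2 := (sqrt_lt' ((sqrt_nonneg 2).trans_lt hx)).1 hx
  have hs : √(x ^ 2 - 2) ^ 2 = x ^ 2 - 2 := sq_sqrt (sub_pos.2 hx₂).le
  have hpoly := ((((hasDerivAt_pow 6 x).fun_neg.div_const 6).fun_add
    ((hasDerivAt_pow 4 x).const_mul (3 / 2 * (π - 1)))).fun_sub
    ((hasDerivAt_pow 3 x).const_mul (8 * π / 3))).fun_add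
    ((hasDerivAt_pow 2 x).const_mul (3 * π - 5 / 2))
  refine (((hpoly.fun_add ((hasDerivAt_sqrt_sq_sub_pow hx₂ 3).const_mul (8 / 5))).fun_add
    ((hasDerivAt_sqrt_sq_sub_pow hx₂ 1).const_mul 8)).fun_add
    (hasDerivAt_arccosPrimitive₃ hx)).congr_deriv ?_
  simp only [P₃, one_pow, mul_one]
  push_cast
  linear_combination 8 * x * √(x ^ 2 - 2) * hs

lemma primitive₃_sqrt_two : primitive₃ √2 = 12 * π - 16 * √2 * π / 3 - 37 / 3 := by
  have h2 : √2 ^ 2 = 2 := sq_sqrt zero_le_two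
  have hs : √2 ^ 2 - 2 = 0 := sub_eq_zero.2 h2
  simp only [primitive₃, arccosPrimitive₃, hs, sqrt_zero, arctan_zero, mul_zero]
  grind

lemma primitive₃_sqrt_three : primitive₃ √3 = π / 2 + 1 / 10 := by
  have h3 : √3 ^ 2 = 3 := sq_sqrt zero_le_three
  have hs : √3 ^ 2 - 2 = 1 := by rw [h3]; norm_num
  simp only [primitive₃, arccosPrimitive₃, hs, sqrt_one, mul_one, arctan_one, arctan_sqrt_three]
  grind

lemma integral_P₃_one : ∫ l in √2..√3, P₃ 1 l = 16 * √2 * π / 3 - 23 * π / 2 + 373 / 30 := by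
  have hle : √2 ≤ √3 := sqrt_le_sqrt (by norm_num)
  have hcont : Continuous primitive₃ := by unfold primitive₃ arccosPrimitive₃; fun_prop
  have hint : IntervalIntegrable (P₃ 1) volume √2 √3 := by
    refine ContinuousOn.intervalIntegrable_of_Icc hle ?_
    have hpos : ∀ x ∈ Icc √2 √3, 0 < x ^ 2 - 1 ^ 2 := fun x hx ↦
      sub_pos.2 (pow_lt_pow_left₀ (one_lt_sqrt_two.trans_le hx.1) zero_le_one two_ne_zero)
    have hne : ∀ x ∈ Icc √2 √3, x ^ 2 - 1 ^ 2 ≠ 0 := fun x hx ↦ (hpos x hx).ne'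
    have hsqrt_ne : ∀ x ∈ Icc √2 √3, √(x ^ 2 - 1 ^ 2) ≠ 0 := fun x hx ↦
      (sqrt_pos.2 (hpos x hx)).ne'
    unfold P₃
    fun_prop (disch := assumption)
  rw [intervalIntegral.integral_eq_sub_of_hasDerivAt_of_le hle hcont.continuousOn
    (fun x hx ↦ hasDerivAt_primitive₃ hx.1) hint, primitive₃_sqrt_three, primitive₃_sqrt_two]
  ring

lemma integral_P₃ {a : ℝ} (ha : 0 < a) :
    ∫ l in √2 * a..√3 * a, P₃ a l = 16 * √2 * π / 3 - 23 * π / 2 + 373 / 30 := by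
  rw [integral_eq_of_comp_mul_right_eq_div ha.ne' (P₃_mul_right ha), integral_P₃_one]

theorem normalization (a : ℝ) (ha : 0 < a) :
    (∫ l in (0:ℝ)..a, P₁ a l) + (∫ l in a..(Real.sqrt 2 * a), P₂ a l)
      + (∫ l in (Real.sqrt 2 * a)..(Real.sqrt 3 * a), P₃ a l) = 1 := by
  rw [integral_P₁ ha.ne', integral_P₂ ha, integral_P₃ ha]
  ring
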